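/- arXiv:math/0509148 — 3 statements merged into one kernel-verified Lean document; each statement's English description precedes it below -/
import Mathlib

section
/- Let R be a ring, n a positive integer, and let M_1, ..., M_n be right R-modules with M = M_1 ⊕ M_2 ⊕ ... ⊕ M_n. If for each i there is a positive integer m_i such that every element of End_R(M_i) is a sum of m_i commutators in End_R(M_i), then every element of End_R(M) is a sum of max(m_1, ..., m_n) + n - 1 commutators in End_R(M). In particular, if each End_R(M_i) is a commutator ring, then so is End_R(M). -/
/-- `a` is a sum of `k` additive commutators `x*y - y*x` of elements of the ring. -/
def IsSumOfNCommutators {A : Type*} [Ring A] (k : ℕ) (a : A) : Prop :=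
  ∃ x y : Fin k → A, a = ∑ i, (x i * y i - y i * x i)

/-- `a` is a (finite) sum of additive commutators `x*y - y*x` of elements of the ring. -/
def IsSumOfCommutators {A : Type*} [Ring A] (a : A) : Prop :=
  ∃ (n : ℕ) (x y : Fin n → A), a = ∑ i, (x i * y i - y i * x i)

/-!
For an idempotent `e` and `f` with `e f = f e = 0`, the off-diagonal part of `a` is one
commutator: `e a f + f a e = [e, e a f - f a e]`. Splitting off one idempotent at a time, `n - 1`
commutators reduce an endomorphism of `M₁ ⊕ ⋯ ⊕ Mₙ` to its diagonal part. That part lies in the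
image of the ring `∏ End (Mᵢ)`, in which the commutators of all components are formed
simultaneously, so it costs `max mᵢ` commutators rather than `∑ mᵢ`.
-/

namespace IsSumOfNCommutators

variable {A B : Type*} [Ring A] [Ring B] {k l : ℕ} {a b : A}

theorem zero (k : ℕ) : IsSumOfNCommutators k (0 : A) :=
  ⟨0, 0, by simp⟩

theorem commutator (x y : A) : IsSumOfNCommutators 1 (x * y - y * x) :=
  ⟨fun _ ↦ x, fun _ ↦ y, by simp⟩

theorem add (ha : IsSumOfNCommutators k a) (hb : IsSumOfNCommutators l b) :
    IsSumOfNCommutators (k + l) (a + b) := by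
  obtain ⟨x, y, rfl⟩ := ha
  obtain ⟨z, w, rfl⟩ := hb
  refine ⟨Fin.append x z, Fin.append y w, ?_⟩
  simp only [Fin.sum_univ_add, Fin.append_left, Fin.append_right]

theorem mono (hkl : k ≤ l) (ha : IsSumOfNCommutators k a) : IsSumOfNCommutators l a := by
  simpa [Nat.add_sub_cancel' hkl] using ha.add (zero (l - k))

theorem map {F : Type*} [FunLike F A B] [NonUnitalRingHomClass F A B] (f : F)
    (ha : IsSumOfNCommutators k a) : IsSumOfNCommutators k (f a) := by
  obtain ⟨x, y, rfl⟩ := ha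
  exact ⟨f ∘ x, f ∘ y, by simp⟩

theorem pi {ι : Type*} {C : ι → Type*} [∀ i, Ring (C i)] {c : ∀ i, C i}
    (hc : ∀ i, IsSumOfNCommutators k (c i)) : IsSumOfNCommutators k c := by
  choose x y hxy using hc
  refine ⟨fun j i ↦ x i j, fun j i ↦ y i j, funext fun i ↦ ?_⟩
  simp [hxy i]

end IsSumOfNCommutators

section Idempotents

open Finset

variable {A ι : Type*} [Ring A] {e : ι → A}

theorem isSumOfNCommutators_one_sandwich_add_sub {p q : A} (hp : IsIdempotentElem p)
    (hpq : p * q = 0) (hqp : q * p = 0) (a : A) :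
    IsSumOfNCommutators 1 ((p + q) * a * (p + q) - (p * a * p + q * a * q)) := by
  have left : p * (p * a * q - q * a * p) = p * a * q := by
    simp only [mul_sub, ← mul_assoc, hp.eq, hpq, zero_mul, sub_zero]
  have right : (p * a * q - q * a * p) * p = -(q * a * p) := by
    simp only [sub_mul, mul_assoc, hp.eq, hqp, mul_zero, zero_sub]
  convert IsSumOfNCommutators.commutator p (p * a * q - q * a * p) using 1
  rw [left, right]
  noncomm_ring

theorem isSumOfNCommutators_sandwich_sum_sub_sum_sandwich (he : OrthogonalIdempotents e)
    (s : Finset ι) (a : A) :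
    IsSumOfNCommutators (#s - 1)
      ((∑ i ∈ s, e i) * a * (∑ i ∈ s, e i) - ∑ i ∈ s, e i * a * e i) := by
  obtain rfl | hs := s.eq_empty_or_nonempty
  · simpa using IsSumOfNCommutators.zero 0
  induction hs using Finset.Nonempty.cons_induction with
  | singleton i => simpa using IsSumOfNCommutators.zero 0
  | cons j s hj hs ih =>
    have sum_mul_e : (∑ i ∈ s, e i) * e j = 0 := by
      rw [sum_mul]
      exact sum_eq_zero fun i hi ↦ he.ortho (ne_of_mem_of_not_mem hi hj)
    have split_off :=
      isSumOfNCommutators_one_sandwich_add_sub (he.idem j) (he.mul_sum_of_notMem hj) sum_mul_e a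
    rw [sum_cons, sum_cons, card_cons, Nat.add_sub_cancel, ← Nat.sub_add_cancel hs.card_pos]
    convert ih.add split_off using 1
    abel

theorem isSumOfNCommutators_sub_sum_sandwich [Fintype ι] (he : CompleteOrthogonalIdempotents e)
    (a : A) : IsSumOfNCommutators (Fintype.card ι - 1) (a - ∑ i, e i * a * e i) := by
  simpa [he.complete] using
    isSumOfNCommutators_sandwich_sum_sub_sum_sandwich he.toOrthogonalIdempotents univ a

end Idempotents

section DirectSum

open Finset
open scoped DirectSum

variable {S ι : Type*} [Semiring S] {M : ι → Type*}

section AddCommMonoid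

variable [∀ i, AddCommMonoid (M i)] [∀ i, Module S (M i)]

/-- The embedding of `∏ End (M i)` into `End (⨁ M i)` as the block-diagonal endomorphisms:
`DirectSum.lmap` as a ring homomorphism. -/
def lmapRingHom : (∀ i, Module.End S (M i)) →+* Module.End S (⨁ i, M i) where
  toFun := DirectSum.lmap
  map_one' := DirectSum.lmap_id
  map_mul' f g := DirectSum.lmap_comp g f
  map_zero' := by ext; simp
  map_add' f g := by ext; simp

variable [DecidableEq ι]

/-- The `i`-th diagonal entry `M i → ⨁ M j → ⨁ M j → M i` of the block matrix of an endomorphism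
of `⨁ M j`. -/
def diagonalEntry (ψ : Module.End S (⨁ i, M i)) (i : ι) : Module.End S (M i) :=
  DirectSum.component S ι M i ∘ₗ ψ ∘ₗ DirectSum.lof S ι M i

theorem lmapRingHom_single (i : ι) (f : Module.End S (M i)) :
    lmapRingHom (Pi.single i f) =
      DirectSum.lof S ι M i ∘ₗ f ∘ₗ DirectSum.component S ι M i := by
  ext j x : 2
  obtain rfl | hij := eq_or_ne i j
  · simp [lmapRingHom, DirectSum.component.lof_self]
  · simp [lmapRingHom, DirectSum.component.of, hij.symm]

theorem sum_sandwich_lmapRingHom_single [Fintype ι] (ψ : Module.End S (⨁ i, M i)) :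
    ∑ i, lmapRingHom (Pi.single i 1) * ψ * lmapRingHom (Pi.single i 1) =
      lmapRingHom (diagonalEntry ψ) := by
  have sandwich (i : ι) : lmapRingHom (Pi.single i 1) * ψ * lmapRingHom (Pi.single i 1) =
      lmapRingHom (Pi.single i (diagonalEntry ψ i)) := by
    simp only [lmapRingHom_single]
    rfl
  simp only [sandwich, ← map_sum, univ_sum_single]

end AddCommMonoid

variable [∀ i, AddCommGroup (M i)] [∀ i, Module S (M i)] [Fintype ι] [DecidableEq ι]

theorem isSumOfNCommutators_sub_lmapRingHom_diagonalEntry (ψ : Module.End S (⨁ i, M i)) :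
    IsSumOfNCommutators (Fintype.card ι - 1) (ψ - lmapRingHom (diagonalEntry ψ)) := by
  rw [← sum_sandwich_lmapRingHom_single]
  exact isSumOfNCommutators_sub_sum_sandwich
    ((CompleteOrthogonalIdempotents.single fun i ↦ Module.End S (M i)).map lmapRingHom) ψ

theorem stmt_5_general (ψ : Module.End S (⨁ i, M i)) (m : ι → ℕ)
    (h : ∀ i, IsSumOfNCommutators (m i) (diagonalEntry ψ i)) :
    IsSumOfNCommutators (univ.sup m + (Fintype.card ι - 1)) ψ := by
  have diagonal : IsSumOfNCommutators (univ.sup m) (lmapRingHom (diagonalEntry ψ)) :=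
    (IsSumOfNCommutators.pi fun i ↦ (h i).mono (le_sup (mem_univ i))).map lmapRingHom
  simpa using diagonal.add (isSumOfNCommutators_sub_lmapRingHom_diagonalEntry ψ)

end DirectSum

/-- Let `M = M 1 ⊕ ... ⊕ M n` be right `R`-modules. If every element of `End (M i)` is a
sum of `m i` commutators (with each `m i` positive), then every element of `End M` is a sum
of `max (m 1, ..., m n) + n - 1` commutators; in particular if each `End (M i)` is a
commutator ring then so is `End M`. -/
theorem stmt_5 {R : Type*} [Ring R] (n : ℕ) (hn : 0 < n)
    (M : Fin n → Type*) [∀ i, AddCommGroup (M i)] [∀ i, Module Rᵐᵒᵖ (M i)] :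
    (∀ m : Fin n → ℕ, (∀ i, 0 < m i) →
      (∀ i, ∀ φ : Module.End Rᵐᵒᵖ (M i), IsSumOfNCommutators (m i) φ) →
      ∀ ψ : Module.End Rᵐᵒᵖ (DirectSum (Fin n) M),
        IsSumOfNCommutators (Finset.univ.sup m + n - 1) ψ) ∧
    ((∀ i, ∀ φ : Module.End Rᵐᵒᵖ (M i), IsSumOfCommutators φ) →
      ∀ ψ : Module.End Rᵐᵒᵖ (DirectSum (Fin n) M), IsSumOfCommutators ψ) := by
  refine ⟨fun m _ h ψ ↦ ?_, fun h ψ ↦ ?_⟩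
  · simpa [Nat.add_sub_assoc hn] using stmt_5_general ψ m fun i ↦ h i _
  · choose m hm using fun i ↦ h i (diagonalEntry ψ i)
    exact ⟨_, stmt_5_general ψ m hm⟩
end

section
/- Let R be a ring, N a right R-module, Ω a nonempty set, and M = ⨁_{i ∈ Ω} N the direct sum of copies of N indexed by Ω. Then End_R(M) is a commutator ring if and only if either Ω is infinite or End_R(N) is a commutator ring. -/
/-!
For finite `Ω` the endomorphism ring is a matrix ring over `End N`. Since
`single i j a * single j i 1 - single j i 1 * single i j a = single i i a - single j j a`, and
off-diagonal matrix units are themselves commutators, every matrix agrees modulo commutators with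
its trace placed in one fixed diagonal entry, so it is a sum of commutators iff its trace is.

For infinite `Ω` the module is isomorphic to `ℕ →₀ P` for some `P`. The left shift `t` is
locally nilpotent with right inverse the right shift `s`, and `y = ∑ₖ sᵏ⁺¹ φ tᵏ`, a finite
sum at each vector, satisfies `t y - y t = φ` by telescoping.
-/

/-- A ring is a commutator ring if each of its elements is a finite sum of additive commutators. -/
def IsCommutatorRing (A : Type*) [Ring A] : Prop :=
  ∀ a : A, IsSumOfCommutators a

/-- The additive subgroup `[A, A]` generated by the additive commutators of a ring. The carrier is
described by `IsSumOfCommutators` so that membership unfolds to it. -/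
def commutatorAddSubgroup (A : Type*) [Ring A] : AddSubgroup A where
  carrier := {a | IsSumOfCommutators a}
  zero_mem' := ⟨0, 0, 0, by simp⟩
  add_mem' := by
    rintro _ _ ⟨m, x, y, rfl⟩ ⟨n, z, w, rfl⟩
    exact ⟨m + n, Fin.append x z, Fin.append y w, by
      simp [Fin.sum_univ_add, -Finset.sum_sub_distrib]⟩
  neg_mem' := by
    rintro _ ⟨n, x, y, rfl⟩
    exact ⟨n, y, x, by simp⟩

section Ring

variable {A B : Type*} [Ring A] [Ring B]

theorem mem_commutatorAddSubgroup {a : A} :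
    a ∈ commutatorAddSubgroup A ↔ IsSumOfCommutators a :=
  Iff.rfl

theorem commutator_mem_commutatorAddSubgroup (x y : A) :
    x * y - y * x ∈ commutatorAddSubgroup A :=
  ⟨1, fun _ ↦ x, fun _ ↦ y, by simp⟩

theorem IsSumOfCommutators.map_addMonoidHom {a : A} (ha : IsSumOfCommutators a) (f : A →+ B)
    (hf : ∀ x y, f (x * y - y * x) ∈ commutatorAddSubgroup B) : IsSumOfCommutators (f a) := by
  obtain ⟨n, x, y, rfl⟩ := ha
  rw [map_sum]
  exact sum_mem (S := commutatorAddSubgroup B) fun i _ ↦ hf (x i) (y i)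

theorem IsSumOfCommutators.map {a : A} (ha : IsSumOfCommutators a) (f : A →ₙ+* B) :
    IsSumOfCommutators (f a) :=
  ha.map_addMonoidHom (f : A →+ B) fun x y ↦ by
    simpa using commutator_mem_commutatorAddSubgroup (f x) (f y)

theorem IsCommutatorRing.of_ringEquiv (hA : IsCommutatorRing A) (e : A ≃+* B) :
    IsCommutatorRing B := fun b ↦ by
  simpa using (hA (e.symm b)).map (e : A →ₙ+* B)

theorem isCommutatorRing_congr (e : A ≃+* B) :
    IsCommutatorRing A ↔ IsCommutatorRing B :=
  ⟨fun h ↦ h.of_ringEquiv e, fun h ↦ h.of_ringEquiv e.symm⟩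

end Ring

section Matrix

open Matrix

variable {A n : Type*} [Ring A] [Fintype n]

theorem trace_commutator_mem_commutatorAddSubgroup (X Y : Matrix n n A) :
    (X * Y - Y * X).trace ∈ commutatorAddSubgroup A := by
  have trace_eq : (X * Y - Y * X).trace = ∑ i, ∑ k, (X i k * Y k i - Y k i * X i k) := by
    rw [trace_sub]
    simp only [trace, diag_apply, mul_apply, Finset.sum_sub_distrib]
    rw [Finset.sum_comm (f := fun i k ↦ Y i k * X k i)]
  rw [trace_eq]
  exact sum_mem fun i _ ↦ sum_mem fun k _ ↦ commutator_mem_commutatorAddSubgroup _ _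

variable [DecidableEq n]

theorem single_mem_commutatorAddSubgroup {i j : n} (hij : i ≠ j) (a : A) :
    single i j a ∈ commutatorAddSubgroup (Matrix n n A) := by
  simpa [single_mul_single_of_ne _ _ _ _ hij.symm] using
    commutator_mem_commutatorAddSubgroup (single i j a) (single j j 1)

theorem single_sub_single_mem_commutatorAddSubgroup (i j : n) (a : A) :
    single i i a - single j j a ∈ commutatorAddSubgroup (Matrix n n A) := by
  simpa using commutator_mem_commutatorAddSubgroup (single i j a) (single j i 1)

theorem sub_single_trace_mem_commutatorAddSubgroup (i₀ : n) (X : Matrix n n A) :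
    X - single i₀ i₀ X.trace ∈ commutatorAddSubgroup (Matrix n n A) := by
  induction X using Matrix.induction_on' with
  | h_zero => simp
  | h_add X Y hX hY =>
    rw [trace_add, single_add, add_sub_add_comm]
    exact add_mem hX hY
  | h_std_basis i j a =>
    obtain rfl | hij := eq_or_ne i j
    · simpa using single_sub_single_mem_commutatorAddSubgroup i i₀ a
    · simpa [trace_single_eq_of_ne _ _ _ hij] using single_mem_commutatorAddSubgroup hij a

theorem isSumOfCommutators_iff_trace [Nonempty n] {X : Matrix n n A} :
    IsSumOfCommutators X ↔ IsSumOfCommutators X.trace := by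
  refine ⟨fun hX ↦ hX.map_addMonoidHom (traceAddMonoidHom n A)
    trace_commutator_mem_commutatorAddSubgroup, fun htr ↦ ?_⟩
  let i₀ : n := Classical.arbitrary n
  have single_trace_mem : single i₀ i₀ X.trace ∈ commutatorAddSubgroup (Matrix n n A) :=
    htr.map_addMonoidHom (singleAddMonoidHom i₀ i₀) fun x y ↦ by
      rw [map_sub]
      simpa using
        commutator_mem_commutatorAddSubgroup (single i₀ i₀ x) (single i₀ i₀ y)
  rw [← mem_commutatorAddSubgroup, ← sub_add_cancel X (single i₀ i₀ X.trace)]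
  exact add_mem (sub_single_trace_mem_commutatorAddSubgroup i₀ X) single_trace_mem

theorem isCommutatorRing_matrix_iff [Nonempty n] :
    IsCommutatorRing (Matrix n n A) ↔ IsCommutatorRing A := by
  refine ⟨fun h a ↦ ?_, fun h X ↦ isSumOfCommutators_iff_trace.2 (h _)⟩
  obtain ⟨X, rfl⟩ := trace_surjective (n := n) (R := A) a
  exact isSumOfCommutators_iff_trace.1 (h X)

end Matrix

section LocallyNilpotent

open Function

variable {S M P : Type*} [Semiring S]

/-- The pointwise sum of a family of linear maps of which only finitely many are nonzero at each
vector. -/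
noncomputable def finsumLinearMap [AddCommMonoid M] [AddCommMonoid P] [Module S M] [Module S P]
    {ι : Type*} (F : ι → M →ₗ[S] P) (hF : ∀ m, HasFiniteSupport fun i ↦ F i m) : M →ₗ[S] P where
  toFun m := ∑ᶠ i, F i m
  map_add' m m' := by simp only [map_add, finsum_add_distrib (hF m) (hF m')]
  map_smul' c m := by simp only [map_smul, RingHom.id_apply, smul_finsum' c (hF m)]

theorem exists_commutator_eq_of_locally_nilpotent [AddCommGroup M] [Module S M]
    {s t : Module.End S M} (hts : t * s = 1) (ht : ∀ m, ∃ n, (t ^ n) m = 0) (φ : Module.End S M) :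
    ∃ y, t * y - y * t = φ := by
  let F (k : ℕ) : Module.End S M := s ^ (k + 1) * φ * t ^ k
  have support_subset {m : M} {n : ℕ} (hn : (t ^ n) m = 0) :
      support (fun k ↦ F k m) ⊆ Finset.range n := fun k hk ↦ by
    by_contra hnk
    exact hk (by simp [F, Module.End.pow_map_zero_of_le (by simpa using hnk) hn])
  have hF (m : M) : HasFiniteSupport fun k ↦ F k m := by
    obtain ⟨n, hn⟩ := ht m
    exact (Finset.finite_toSet _).subset (support_subset hn)
  let y : Module.End S M := finsumLinearMap F hF
  have y_apply {m : M} {n : ℕ} (hn : (t ^ n) m = 0) : y m = ∑ k ∈ Finset.range n, F k m :=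
    finsum_eq_sum_of_support_subset _ (support_subset hn)
  refine ⟨y, LinearMap.ext fun m ↦ ?_⟩
  obtain ⟨n, hn⟩ := ht m
  have hn' : (t ^ n) (t m) = 0 := by
    rw [← Module.End.mul_apply, ← pow_succ]
    exact Module.End.pow_map_zero_of_le n.le_succ hn
  have left_term (k : ℕ) : t (F k m) = (s ^ k * φ * t ^ k) m := by
    simp only [F, ← Module.End.mul_apply, ← mul_assoc, pow_succ' s, hts, one_mul]
  have right_term (k : ℕ) : F k (t m) = (s ^ (k + 1) * φ * t ^ (k + 1)) m := by
    simp only [F, ← Module.End.mul_apply, mul_assoc, pow_succ t]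
  calc (t * y - y * t) m = t (y m) - y (t m) := rfl
    _ = ∑ k ∈ Finset.range n, ((s ^ k * φ * t ^ k) m - (s ^ (k + 1) * φ * t ^ (k + 1)) m) := by
      simp only [y_apply hn, y_apply hn', map_sum, left_term, right_term, Finset.sum_sub_distrib]
    _ = (s ^ 0 * φ * t ^ 0) m - (s ^ n * φ * t ^ n) m :=
      Finset.sum_range_sub' (fun k ↦ (s ^ k * φ * t ^ k) m) n
    _ = φ m := by simp [hn]

theorem pow_lcomapDomain_succ_apply [AddCommMonoid P] [Module S P] (n : ℕ)
    (f : ℕ →₀ P) (i : ℕ) :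
    ((Finsupp.lcomapDomain Nat.succ Nat.succ_injective : Module.End S (ℕ →₀ P)) ^ n) f i =
      f (i + n) := by
  induction n generalizing f with
  | zero => simp
  | succ n ih =>
    rw [pow_succ, Module.End.mul_apply, ih]
    rfl

theorem isCommutatorRing_end_nat_finsupp [AddCommGroup P] [Module S P] :
    IsCommutatorRing (Module.End S (ℕ →₀ P)) := fun φ ↦ by
  let t : Module.End S (ℕ →₀ P) := Finsupp.lcomapDomain Nat.succ Nat.succ_injective
  let s : Module.End S (ℕ →₀ P) := Finsupp.lmapDomain P S Nat.succ
  have hts : t * s = 1 :=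
    LinearMap.ext <|
      Finsupp.leftInverse_lcomapDomain_mapDomain (R := S) (M := P) Nat.succ Nat.succ_injective
  have ht (f : ℕ →₀ P) : ∃ n, (t ^ n) f = 0 := by
    obtain ⟨n, hn⟩ := f.support.exists_nat_subset_range
    refine ⟨n, Finsupp.ext fun i ↦ ?_⟩
    rw [pow_lcomapDomain_succ_apply (S := S), Finsupp.zero_apply, ← Finsupp.notMem_support_iff]
    exact fun hi ↦ by simpa using hn hi
  obtain ⟨y, rfl⟩ := exists_commutator_eq_of_locally_nilpotent hts ht φ
  exact commutator_mem_commutatorAddSubgroup t y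

end LocallyNilpotent

section DirectSum

variable {S N Ω : Type*} [Semiring S] [AddCommGroup N] [Module S N]

theorem nonempty_equiv_nat_prod [Infinite Ω] : Nonempty (Ω ≃ ℕ × Ω) := by
  rw [← Cardinal.lift_mk_eq']
  simp

theorem isCommutatorRing_end_directSum_of_infinite [Infinite Ω] :
    IsCommutatorRing (Module.End S (DirectSum Ω fun _ ↦ N)) := by
  classical
  obtain ⟨e⟩ := nonempty_equiv_nat_prod (Ω := Ω)
  let e' : (ℕ →₀ Ω →₀ N) ≃ₗ[S] DirectSum Ω fun _ ↦ N :=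
    (Finsupp.curryLinearEquiv S).symm ≪≫ₗ Finsupp.domLCongr e.symm ≪≫ₗ
      finsuppLEquivDirectSum S N Ω
  exact isCommutatorRing_end_nat_finsupp.of_ringEquiv e'.conjRingEquiv

theorem isCommutatorRing_end_directSum_iff_of_finite [Finite Ω] [Nonempty Ω] :
    IsCommutatorRing (Module.End S (DirectSum Ω fun _ ↦ N)) ↔
      IsCommutatorRing (Module.End S N) := by
  classical
  have := Fintype.ofFinite Ω
  let e : Module.End S (DirectSum Ω fun _ ↦ N) ≃+* Matrix Ω Ω (Module.End S N) :=
    (DirectSum.linearEquivFunOnFintype S Ω fun _ ↦ N).conjRingEquiv.trans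
      (endVecRingEquivMatrixEnd Ω S N)
  exact (isCommutatorRing_congr e).trans isCommutatorRing_matrix_iff

end DirectSum

theorem stmt_8_general {S : Type*} [Semiring S] (N : Type*) [AddCommGroup N] [Module S N]
    (Ω : Type*) [Nonempty Ω] :
    IsCommutatorRing (Module.End S (DirectSum Ω fun _ : Ω => N)) ↔
      Infinite Ω ∨ IsCommutatorRing (Module.End S N) := by
  obtain hfin | hinf := finite_or_infinite Ω
  · simpa [not_infinite_iff_finite.2 hfin] using isCommutatorRing_end_directSum_iff_of_finite
  · exact iff_of_true isCommutatorRing_end_directSum_of_infinite (.inl hinf)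

/-- For a nonempty set `Ω` and a right `R`-module `N`, `End (⨁_{i ∈ Ω} N)` is a commutator
ring if and only if either `Ω` is infinite or `End N` is a commutator ring. -/
theorem stmt_8 {R : Type*} [Ring R] (N : Type*) [AddCommGroup N] [Module Rᵐᵒᵖ N]
    (Ω : Type*) [Nonempty Ω] :
    (∀ φ : Module.End Rᵐᵒᵖ (DirectSum Ω fun _ : Ω => N), IsSumOfCommutators φ) ↔
      (Infinite Ω ∨ ∀ φ : Module.End Rᵐᵒᵖ N, IsSumOfCommutators φ) :=
  stmt_8_general N Ω
end

section
/- Let R be a ring, n a positive integer, and A a matrix in M_n(R). Then A is a sum of commutators of elements of M_n(R) if and only if the trace of A is a sum of commutators of elements of R. -/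
/-!
Modulo sums of commutators, every matrix `A` is congruent to `single o o (trace A)` for any fixed
index `o`: the off-diagonal matrix units are commutators, and so are the differences of two diagonal
ones carrying the same coefficient. Conversely, `trace (X * Y) - trace (Y * X)` is the sum of the
commutators of the entries `X i j` and `Y j i`.
-/

namespace IsSumOfCommutators

variable {A B : Type*} [Ring A] [Ring B]

theorem zero : IsSumOfCommutators (0 : A) :=
  ⟨0, 0, 0, by simp⟩

theorem mul_sub_mul (x y : A) : IsSumOfCommutators (x * y - y * x) :=
  ⟨1, fun _ => x, fun _ => y, by simp⟩

theorem add {a b : A} (ha : IsSumOfCommutators a) (hb : IsSumOfCommutators b) :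
    IsSumOfCommutators (a + b) := by
  obtain ⟨m, x, y, rfl⟩ := ha
  obtain ⟨n, z, w, rfl⟩ := hb
  exact ⟨m + n, Fin.append x z, Fin.append y w, by
    simp only [Fin.sum_univ_add, Fin.append_left, Fin.append_right]⟩

theorem sum {ι : Type*} {s : Finset ι} {f : ι → A} (h : ∀ i ∈ s, IsSumOfCommutators (f i)) :
    IsSumOfCommutators (∑ i ∈ s, f i) :=
  Finset.sum_induction f IsSumOfCommutators (fun _ _ => add) zero h

theorem map_s13 {a : A} (ha : IsSumOfCommutators a) (f : A →+ B)
    (hf : ∀ x y, IsSumOfCommutators (f (x * y - y * x))) : IsSumOfCommutators (f a) := by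
  obtain ⟨n, x, y, rfl⟩ := ha
  rw [map_sum]
  exact sum fun i _ => hf (x i) (y i)

end IsSumOfCommutators

section Matrix

open Matrix

variable {R m n : Type*} [Ring R] [Fintype m] [Fintype n]

theorem isSumOfCommutators_trace_mul_sub_trace_mul (X : Matrix m n R) (Y : Matrix n m R) :
    IsSumOfCommutators (trace (X * Y) - trace (Y * X)) := by
  have entrywise : trace (X * Y) - trace (Y * X) =
      ∑ i, ∑ j, (X i j * Y j i - Y j i * X i j) := by
    simp only [trace, diag_apply, mul_apply, Finset.sum_sub_distrib]
    rw [Finset.sum_comm (f := fun i j => Y j i * X i j)]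
  rw [entrywise]
  exact .sum fun i _ => .sum fun j _ => .mul_sub_mul (X i j) (Y j i)

variable [DecidableEq n]

theorem IsSumOfCommutators.trace {A : Matrix n n R} (hA : IsSumOfCommutators A) :
    IsSumOfCommutators A.trace :=
  hA.map_s13 (traceAddMonoidHom n R) fun X Y => by
    simpa only [traceAddMonoidHom_apply, trace_sub] using
      isSumOfCommutators_trace_mul_sub_trace_mul X Y

theorem IsSumOfCommutators.single {a : R} (ha : IsSumOfCommutators a) (i : n) :
    IsSumOfCommutators (single i i a) :=
  ha.map_s13 (singleAddMonoidHom i i) fun x y => by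
    rw [map_sub]
    simpa using mul_sub_mul (Matrix.single i i x) (Matrix.single i i y)

theorem isSumOfCommutators_single_of_ne {i j : n} (hij : i ≠ j) (a : R) :
    IsSumOfCommutators (single i j a) := by
  simpa [hij.symm] using IsSumOfCommutators.mul_sub_mul (single i j a) (single j j 1)

theorem isSumOfCommutators_single_sub_single (i j : n) (a : R) :
    IsSumOfCommutators (single i i a - single j j a) := by
  simpa using IsSumOfCommutators.mul_sub_mul (single i j a) (single j i 1)

theorem isSumOfCommutators_sub_single_trace (A : Matrix n n R) (o : n) :
    IsSumOfCommutators (A - single o o A.trace) := by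
  induction A using Matrix.induction_on' with
  | h_zero => simpa using IsSumOfCommutators.zero
  | h_add A B hA hB => simpa only [trace_add, single_add, add_sub_add_comm] using hA.add hB
  | h_std_basis i j a =>
    obtain rfl | hij := eq_or_ne i j
    · simpa only [trace_single_eq_same] using isSumOfCommutators_single_sub_single i o a
    · simpa [trace_single_eq_of_ne i j a hij] using isSumOfCommutators_single_of_ne hij a

theorem stmt_13_general (A : Matrix n n R) :
    IsSumOfCommutators A ↔ IsSumOfCommutators A.trace := by
  refine ⟨.trace, fun hA => ?_⟩
  obtain _ | ⟨⟨o⟩⟩ := isEmpty_or_nonempty n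
  · simpa only [Subsingleton.elim A 0] using IsSumOfCommutators.zero
  · simpa only [sub_add_cancel] using (isSumOfCommutators_sub_single_trace A o).add (hA.single o)

end Matrix

/-- An `n×n` matrix `A` over a ring `R` is a sum of commutators in `Mₙ(R)` if and only if
its trace is a sum of commutators in `R`. -/
theorem stmt_13 {R : Type*} [Ring R] (n : ℕ) (hn : 0 < n)
    (A : Matrix (Fin n) (Fin n) R) :
    IsSumOfCommutators A ↔ IsSumOfCommutators (Matrix.trace A) :=
  stmt_13_general A
end
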